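/- Telescoped gradient bound for biased gradient descent: Let d ≥ 1 and let L : ℝ^d → ℝ be differentiable with β-Lipschitz gradient for some β > 0. Let (w_t)_{t≥1} be generated by w_{t+1} = w_t − η_t g_t with arbitrary descent vectors g_t ∈ ℝ^d and step sizes 0 < η_t ≤ 1/β, and set δ_t² = ‖g_t − ∇L(w_t)‖². Then for every T ≥ 1, ∑_{t=1}^T η_t ‖∇L(w_t)‖² ≤ 2 (L(w_1) − L(w_{T+1})) + ∑_{t=1}^T η_t δ_t². -/

import Mathlib

open Finset

/-!
A `β`-smooth function satisfies the one-sided bound `⟪∇f y - ∇f x, y - x⟫ ≤ β * ‖y - x‖ ^ 2` by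
Cauchy–Schwarz, and comparing derivatives along a segment gives the descent lemma
`f (x + v) ≤ f x + ⟪∇f x, v⟫ + β / 2 * ‖v‖ ^ 2`. For `v = -(η • g)` with `0 ≤ η` and `β * η ≤ 1`,
the polarization identity `2 * ⟪g, ∇f x⟫ = ‖g‖ ^ 2 + ‖∇f x‖ ^ 2 - ‖g - ∇f x‖ ^ 2` lets the
quadratic term be absorbed by `-η / 2 * ‖g‖ ^ 2`, leaving a one-step bound that telescopes.
-/

open scoped Gradient RealInnerProductSpace

section

variable {E : Type*} [NormedAddCommGroup E] [InnerProductSpace ℝ E]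

lemma real_inner_le_mul_norm_sq_of_norm_le {u v : E} {β : ℝ} (h : ‖u‖ ≤ β * ‖v‖) :
    ⟪u, v⟫ ≤ β * ‖v‖ ^ 2 :=
  calc
    ⟪u, v⟫ ≤ ‖u‖ * ‖v‖ := real_inner_le_norm u v
    _ ≤ β * ‖v‖ * ‖v‖ := by gcongr
    _ = β * ‖v‖ ^ 2 := by ring

lemma real_inner_add_smul_le {f : E → E} {β : ℝ} {x : E}
    (h : ∀ y, ⟪f y - f x, y - x⟫ ≤ β * ‖y - x‖ ^ 2) (v : E) {s : ℝ} (hs : 0 ≤ s) :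
    ⟪f (x + s • v), v⟫ ≤ ⟪f x, v⟫ + β * s * ‖v‖ ^ 2 := by
  obtain rfl | hs := hs.eq_or_lt
  · simp
  have h_scaled : s * ⟪f (x + s • v) - f x, v⟫ ≤ s * (β * s * ‖v‖ ^ 2) :=
    calc
      s * ⟪f (x + s • v) - f x, v⟫ = ⟪f (x + s • v) - f x, x + s • v - x⟫ := by
        rw [add_sub_cancel_left, real_inner_smul_right]
      _ ≤ β * ‖x + s • v - x‖ ^ 2 := h _
      _ = s * (β * s * ‖v‖ ^ 2) := by
        rw [add_sub_cancel_left, norm_smul, Real.norm_of_nonneg hs.le]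
        ring
  have h_diff := le_of_mul_le_mul_left h_scaled hs
  rw [inner_sub_left] at h_diff
  linarith

variable [CompleteSpace E] {f : E → ℝ} {β : ℝ} {x : E}

lemma hasDerivAt_comp_add_smul {v : E} {s : ℝ} (hf : DifferentiableAt ℝ f (x + s • v)) :
    HasDerivAt (fun r : ℝ ↦ f (x + r • v)) ⟪∇ f (x + s • v), v⟫ s := by
  have h_line : HasDerivAt (fun r : ℝ ↦ x + r • v) v s := by
    simpa using ((hasDerivAt_id s).smul_const v).const_add x
  rw [inner_gradient_left]
  exact hf.hasFDerivAt.comp_hasDerivAt s h_line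

lemma le_add_inner_gradient_add_sq (hf : Differentiable ℝ f)
    (h : ∀ y, ⟪∇ f y - ∇ f x, y - x⟫ ≤ β * ‖y - x‖ ^ 2) (v : E) :
    f (x + v) ≤ f x + ⟪∇ f x, v⟫ + β / 2 * ‖v‖ ^ 2 := by
  have h_line (s : ℝ) : HasDerivAt (fun r : ℝ ↦ f (x + r • v)) ⟪∇ f (x + s • v), v⟫ s :=
    hasDerivAt_comp_add_smul (hf _)
  have h_quad (s : ℝ) :
      HasDerivAt (fun r : ℝ ↦ f x + r * ⟪∇ f x, v⟫ + β / 2 * ‖v‖ ^ 2 * r ^ 2)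
        (⟪∇ f x, v⟫ + β * s * ‖v‖ ^ 2) s := by
    refine ((((hasDerivAt_id s).mul_const _).const_add _).add
      ((hasDerivAt_pow 2 s).const_mul _)).congr_deriv ?_
    push_cast
    ring
  have h_le := image_le_of_deriv_right_le_deriv_boundary
    (fun s _ ↦ (h_line s).continuousAt.continuousWithinAt)
    (fun s _ ↦ (h_line s).hasDerivWithinAt) (by simp)
    (fun s _ ↦ (h_quad s).continuousAt.continuousWithinAt)
    (fun s _ ↦ (h_quad s).hasDerivWithinAt)
    (fun s hs ↦ real_inner_add_smul_le h v hs.1) (Set.right_mem_Icc.2 zero_le_one)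
  simpa using h_le

lemma mul_norm_gradient_sq_le (hf : Differentiable ℝ f)
    (h : ∀ y, ⟪∇ f y - ∇ f x, y - x⟫ ≤ β * ‖y - x‖ ^ 2) (g : E) {η : ℝ}
    (hη : 0 ≤ η) (hβη : β * η ≤ 1) :
    η * ‖∇ f x‖ ^ 2 ≤ 2 * (f x - f (x - η • g)) + η * ‖g - ∇ f x‖ ^ 2 := by
  have h_descent : f (x - η • g) ≤ f x - η * ⟪g, ∇ f x⟫ + β / 2 * (η * ‖g‖) ^ 2 := by
    simpa [← sub_eq_add_neg, inner_smul_right, real_inner_comm, norm_smul, abs_of_nonneg hη]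
      using le_add_inner_gradient_add_sq hf h (-(η • g))
  have h_quad : β * η * (η * ‖g‖ ^ 2) ≤ η * ‖g‖ ^ 2 :=
    mul_le_of_le_one_left (by positivity) hβη
  rw [norm_sub_sq_real]
  linarith

theorem biased_gd_telescoped_general (hf : Differentiable ℝ f)
    (h : ∀ x y, ⟪∇ f y - ∇ f x, y - x⟫ ≤ β * ‖y - x‖ ^ 2) {w g : ℕ → E} {η : ℕ → ℝ} {T : ℕ}
    (hη : ∀ t ∈ Icc 1 T, 0 ≤ η t) (hβη : ∀ t ∈ Icc 1 T, β * η t ≤ 1)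
    (hw : ∀ t ∈ Icc 1 T, w (t + 1) = w t - η t • g t) :
    ∑ t ∈ Icc 1 T, η t * ‖∇ f (w t)‖ ^ 2 ≤
      2 * (f (w 1) - f (w (T + 1))) + ∑ t ∈ Icc 1 T, η t * ‖g t - ∇ f (w t)‖ ^ 2 := by
  have h_step : ∀ t ∈ Icc 1 T, η t * ‖∇ f (w t)‖ ^ 2 ≤
      2 * (f (w t) - f (w (t + 1))) + η t * ‖g t - ∇ f (w t)‖ ^ 2 := fun t ht ↦ by
    rw [hw t ht]
    exact mul_norm_gradient_sq_le hf (h _) _ (hη t ht) (hβη t ht)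
  have h_telescope : ∑ t ∈ Icc 1 T, (f (w t) - f (w (t + 1))) = f (w 1) - f (w (T + 1)) := by
    rw [← neg_inj, ← sum_neg_distrib]
    simpa only [neg_sub, Ico_add_one_right_eq_Icc]
      using sum_Ico_sub (fun t ↦ f (w t)) (Nat.le_add_left 1 T)
  rw [← h_telescope, mul_sum, ← sum_add_distrib]
  exact sum_le_sum h_step

end

/-- Telescoped gradient bound for biased gradient descent. -/
theorem biased_gd_telescoped {d : ℕ} (hd : 1 ≤ d)
    (L : EuclideanSpace ℝ (Fin d) → ℝ) (β : ℝ) (hβ : 0 < β)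
    (hLdiff : Differentiable ℝ L)
    (hLsmooth : ∀ w w', ‖gradient L w - gradient L w'‖ ≤ β * ‖w - w'‖)
    (w g : ℕ → EuclideanSpace ℝ (Fin d)) (η : ℕ → ℝ)
    (hη : ∀ t, 0 < η t) (hηβ : ∀ t, η t ≤ 1 / β)
    (hupd : ∀ t, 1 ≤ t → w (t + 1) = w t - η t • g t)
    (T : ℕ) (hT : 1 ≤ T) :
    ∑ t ∈ Finset.Icc 1 T, η t * ‖gradient L (w t)‖ ^ 2 ≤
      2 * (L (w 1) - L (w (T + 1))) +
        ∑ t ∈ Finset.Icc 1 T, η t * ‖g t - gradient L (w t)‖ ^ 2 := by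
  exact biased_gd_telescoped_general hLdiff
    (fun _ _ ↦ real_inner_le_mul_norm_sq_of_norm_le (hLsmooth _ _)) (fun t _ ↦ (hη t).le)
    (fun t _ ↦ (le_div_iff₀' hβ).1 (hηβ t)) (fun t ht ↦ hupd t (mem_Icc.1 ht).1)
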